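/- Let λ=(λ_1,...,λ_l) be a partition of length l, let ξ_μ ∈ ℂ be arbitrary scalars for each partition μ with λ < μ, and let τ(t) = s_λ(t) + Σ_{λ<μ} ξ_μ s_μ(t) (a well-defined formal series, since each monomial receives contributions from only finitely many μ). Let 0 ≤ k ≤ l−1 and α be a multi-index with wt α < N_{λ,k}. Then ∂^α τ(t) evaluated at t = [x_1]+⋯+[x_k] is zero as a formal power series in x_1,...,x_k. -/

import Mathlib

open MvPolynomial

noncomputable def pS (n : ℕ) : MvPolynomial ℕ ℂ :=
  ∑ m ∈ Finset.range (n + 1), (Nat.factorial m : ℂ)⁻¹ •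
    ∑ c ∈ Finset.univ.filter
        (fun c : Fin m → Fin (n + 1) =>
          (∑ j, ((c j : ℕ))) = n ∧ ∀ j, 1 ≤ (c j : ℕ)),
      ∏ j, X ((c j : ℕ))

noncomputable def pz (n : ℤ) : MvPolynomial ℕ ℂ :=
  if 0 ≤ n then pS n.toNat else 0

noncomputable def schur {l : ℕ} (lam : Fin l → ℕ) : MvPolynomial ℕ ℂ :=
  Matrix.det (Matrix.of fun a b : Fin l =>
    pz ((lam a : ℤ) - ((a : ℕ) : ℤ) + ((b : ℕ) : ℤ)))

def pad {l : ℕ} (lam : Fin l → ℕ) (a : ℕ) : ℕ := if h : a < l then lam ⟨a, h⟩ else 0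

/-- A partition: an antitone, eventually-zero sequence of naturals
(`toFun a` is `λ_{a+1}`, i.e. 0-indexed). -/
structure Ptn where
  toFun : ℕ → ℕ
  anti : ∀ i j : ℕ, i ≤ j → toFun j ≤ toFun i
  bdd : ∃ N, toFun N = 0

/-- The length (number of nonzero parts) of a partition. -/
noncomputable def Ptn.len (μ : Ptn) : ℕ := Nat.find μ.bdd

/-- The Schur function of a partition. -/
noncomputable def Ptn.schurP (μ : Ptn) : MvPolynomial ℕ ℂ :=
  schur (fun a : Fin μ.len => μ.toFun a)

/-- `λ < μ` in the componentwise order, `λ` given as a finite tuple padded by zeros. -/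
def PtnGt {l : ℕ} (lam : Fin l → ℕ) (μ : Ptn) : Prop :=
  (∀ i, pad lam i ≤ μ.toFun i) ∧ (∃ i, pad lam i ≠ μ.toFun i)

/-- The coefficients (as a formal power series in `t`) of
`τ(t) = s_λ(t) + Σ_{λ<μ} ξ_μ s_μ(t)`. -/
noncomputable def tauCoeff {l : ℕ} (lam : Fin l → ℕ) (ξ : Ptn → ℂ) (β : ℕ →₀ ℕ) : ℂ :=
  MvPolynomial.coeff β (schur lam)
    + ∑ᶠ (μ : Ptn) (_ : PtnGt lam μ), ξ μ * MvPolynomial.coeff β μ.schurP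

/-- The coefficients of
`τ^{(k)}(t) = s_{(λ_1,...,λ_k)}(t) + Σ_μ ξ_μ s_{(μ_1,...,μ_k)}(t)`,
the sum over partitions `μ` with `λ < μ` and `μ_i = λ_i` for `i ≥ k+1`. -/
noncomputable def tauKCoeff {l : ℕ} (lam : Fin l → ℕ) (ξ : Ptn → ℂ) (k : ℕ)
    (β : ℕ →₀ ℕ) : ℂ :=
  MvPolynomial.coeff β (schur (fun a : Fin k => pad lam a))
    + ∑ᶠ (μ : Ptn) (_ : PtnGt lam μ ∧ ∀ i, k ≤ i → μ.toFun i = pad lam i),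
        ξ μ * MvPolynomial.coeff β (schur (fun a : Fin k => μ.toFun a))

/-- Formal partial derivative `∂_i` on coefficient functions of power series in `t`. -/
noncomputable def pdCoeff (i : ℕ) (F : (ℕ →₀ ℕ) → ℂ) (β : ℕ →₀ ℕ) : ℂ :=
  ((β i : ℕ) + 1 : ℂ) * F (β + Finsupp.single i 1)

/-- Iterated formal derivative `∂_{i_1} ⋯ ∂_{i_r}` for `L = [i_1,...,i_r]`. -/
noncomputable def derivsCoeff (L : List ℕ) (F : (ℕ →₀ ℕ) → ℂ) : (ℕ →₀ ℕ) → ℂ :=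
  L.foldr pdCoeff F

/-- The power sum `(x_1^n + ⋯ + x_k^n)/n`. -/
noncomputable def psumC (k : ℕ) (n : ℕ) : MvPolynomial (Fin k) ℂ :=
  (n : ℂ)⁻¹ • ∑ i : Fin k, X i ^ n

/-- The coefficient of the monomial `γ` (in `x_1,...,x_k`) of a formal series in `t`
(given by its coefficient function `F`) after the substitution `t_n ↦ (x_1^n+⋯+x_k^n)/n`. -/
noncomputable def evalPS (k : ℕ) (F : (ℕ →₀ ℕ) → ℂ) (γ : Fin k →₀ ℕ) : ℂ :=
  ∑ᶠ β : (ℕ →₀ ℕ), F β * MvPolynomial.coeff γ (∏ n ∈ β.support, psumC k n ^ β n)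

/-!
The derivative `∂_i` lowers the index of `p_n` by `i`, so it maps `det (p_{m_a + b})` to a sum of
determinants of the same shape, each with one of the `m_a` lowered by `i`. At
`t = [x_1] + ⋯ + [x_k]` the series `∑ p_n z^n` becomes `∏ (1 - x_i z)⁻¹`, whence a linear recurrence
expressing each column `b ≥ k` through the previous ones in every row with `m_a + b ≠ 0`. So the
specialized determinant vanishes unless for each `b ≥ k` some `m_a` equals `-b`, which forces a
minor from the columns `b ≥ k` to have degree zero. In `s_μ` with `λ ≤ μ` all these minors have
degree at least `N_{λ,k}`, and `∂^α` lowers the degree by at most `wt α`. Passing from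
polynomials to the series `τ` is harmless: by homogeneity, each coefficient of the specialization
involves only finitely many coefficients of `τ`, hence only finitely many `μ`.
-/

open scoped PowerSeries

/-! ### The generating series of the polynomials `p_n` -/

section TruncatedExponential

variable {R A : Type*} [CommRing R] [Algebra ℚ R] [CommRing A] [Algebra R A]

variable (R) in
/-- The truncated exponential `∑_{m < N} a ^ m / m!`, used in place of `exp a` so that it makes
sense in any algebra. -/
noncomputable def expTrunc (N : ℕ) (a : A) : A :=
  Polynomial.aeval a (PowerSeries.trunc N (PowerSeries.exp R))

lemma expTrunc_eq_sum (N : ℕ) (a : A) :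
    expTrunc R N a = ∑ m ∈ Finset.range N, algebraMap ℚ R (1 / m.factorial) • a ^ m := by
  rw [expTrunc, PowerSeries.trunc_apply, Finset.range_eq_Ico, map_sum]
  simp only [Polynomial.aeval_monomial, PowerSeries.coeff_exp, Algebra.smul_def]

lemma derivation_expTrunc_succ (D : Derivation R A A) (N : ℕ) (a : A) :
    D (expTrunc R (N + 1) a) = expTrunc R N a * D a := by
  rw [expTrunc, D.map_aeval, ← PowerSeries.trunc_derivative, PowerSeries.derivative_exp,
    smul_eq_mul, expTrunc]

end TruncatedExponential

section CoeffDerivation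

variable {R A : Type*} [CommRing R] [CommRing A] [Algebra R A]

/-- The extension of a derivation `D` of `A` to `A⟦X⟧` that acts on each coefficient. -/
noncomputable def coeffDerivation (D : Derivation R A A) : Derivation R A⟦X⟧ A⟦X⟧ :=
  Derivation.mk'
    { toFun f := PowerSeries.mk fun n => D (PowerSeries.coeff n f)
      map_add' _ _ := by ext1; simp
      map_smul' _ _ := by ext1; simp }
    fun f g => by
      ext1 n
      simp only [LinearMap.coe_mk, AddHom.coe_mk, PowerSeries.coeff_mk, PowerSeries.coeff_mul,
        map_sum, map_add, D.leibniz, smul_eq_mul, Finset.sum_add_distrib]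
      congr 1
      exact (Finset.Nat.sum_antidiagonal_swap ..).symm

@[simp]
lemma coeff_coeffDerivation (D : Derivation R A A) (f : A⟦X⟧) (n : ℕ) :
    PowerSeries.coeff n (coeffDerivation D f) = D (PowerSeries.coeff n f) :=
  PowerSeries.coeff_mk n fun n => D (PowerSeries.coeff n f)

end CoeffDerivation

/-- The series `∑_{n ≥ 1} t_n z ^ n`, whose exponential generates the polynomials `pS n`. -/
noncomputable def timeSeries : (MvPolynomial ℕ ℂ)⟦X⟧ :=
  PowerSeries.mk fun n => if n = 0 then 0 else X n

lemma coeff_timeSeries (n : ℕ) :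
    PowerSeries.coeff n timeSeries = if n = 0 then 0 else (X n : MvPolynomial ℕ ℂ) :=
  PowerSeries.coeff_mk n _

lemma X_dvd_timeSeries : PowerSeries.X ∣ timeSeries := by
  simp [PowerSeries.X_dvd_iff, ← PowerSeries.coeff_zero_eq_constantCoeff_apply, coeff_timeSeries]

lemma coeff_timeSeries_pow_of_lt {n m : ℕ} (h : n < m) :
    PowerSeries.coeff n (timeSeries ^ m) = 0 :=
  PowerSeries.X_pow_dvd_iff.1 (pow_dvd_pow_of_dvd X_dvd_timeSeries m) n h

lemma trunc_timeSeries (n : ℕ) :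
    PowerSeries.trunc n timeSeries =
      ∑ j : Fin n, Polynomial.C (if (j : ℕ) = 0 then 0 else X (j : ℕ)) *
        Polynomial.X ^ (j : ℕ) := by
  simp only [PowerSeries.trunc_apply, ← Finset.range_eq_Ico, Finset.sum_range, coeff_timeSeries,
    Polynomial.C_mul_X_pow_eq_monomial]

lemma coeff_timeSeries_pow (n m : ℕ) :
    PowerSeries.coeff n (timeSeries ^ m) =
      ∑ c ∈ Finset.univ.filter (fun c : Fin m → Fin (n + 1) =>
          (∑ j, ((c j : ℕ))) = n ∧ ∀ j, 1 ≤ (c j : ℕ)),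
        ∏ j, (X ((c j : ℕ)) : MvPolynomial ℕ ℂ) := by
  have h_trunc : PowerSeries.coeff n (timeSeries ^ m) =
      ((PowerSeries.trunc (n + 1) timeSeries) ^ m).coeff n := by
    rw [← PowerSeries.coeff_coe_trunc_of_lt n.lt_succ_self, ← PowerSeries.trunc_trunc_pow,
      PowerSeries.coeff_coe_trunc_of_lt n.lt_succ_self, ← Polynomial.coe_pow, Polynomial.coeff_coe]
  rw [h_trunc, trunc_timeSeries, Finset.sum_pow', Polynomial.finsetSum_coeff,
    Fintype.piFinset_univ, Finset.sum_filter]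
  refine Finset.sum_congr rfl fun c _ => ?_
  rw [Finset.prod_mul_distrib, Finset.prod_pow_eq_pow_sum, ← map_prod,
    Polynomial.coeff_C_mul_X_pow, ite_and]
  refine if_congr eq_comm ?_ rfl
  split_ifs with hc
  · exact Finset.prod_congr rfl fun j _ => if_neg (Nat.one_le_iff_ne_zero.1 (hc j))
  · push Not at hc
    obtain ⟨j, hj⟩ := hc
    exact Finset.prod_eq_zero (Finset.mem_univ j) (if_pos (Nat.lt_one_iff.1 hj))

lemma coeff_expTrunc_timeSeries {n N : ℕ} (h : n < N) :
    PowerSeries.coeff n (expTrunc ℂ N timeSeries) = pS n := by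
  have h_smul (c : ℂ) (f : (MvPolynomial ℕ ℂ)⟦X⟧) :
      PowerSeries.coeff n (c • f) = c • PowerSeries.coeff n f :=
    LinearMap.map_smul_of_tower _ c f
  rw [expTrunc_eq_sum, map_sum, pS]
  refine (Finset.sum_subset (Finset.range_subset_range.2 h) fun m _ hm => ?_).symm.trans
    (Finset.sum_congr rfl fun m _ => ?_)
  · rw [h_smul, coeff_timeSeries_pow_of_lt (by simpa using hm), smul_zero]
  · rw [h_smul, coeff_timeSeries_pow]
    simp

/-- The generating series `∑ pS n * z ^ n`. -/
noncomputable def pSeries : (MvPolynomial ℕ ℂ)⟦X⟧ :=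
  PowerSeries.mk pS

lemma coeff_mul_expTrunc_timeSeries (f : (MvPolynomial ℕ ℂ)⟦X⟧) {n N : ℕ} (h : n < N) :
    PowerSeries.coeff n (expTrunc ℂ N timeSeries * f) = PowerSeries.coeff n (pSeries * f) := by
  simp only [PowerSeries.coeff_mul]
  refine Finset.sum_congr rfl fun ij hij => ?_
  have hi : ij.1 < N := (Finset.HasAntidiagonal.antidiagonal.fst_le hij).trans_lt h
  rw [coeff_expTrunc_timeSeries hi, pSeries, PowerSeries.coeff_mk]

lemma derivative_pSeries :
    d⁄dX _ pSeries = pSeries * d⁄dX _ timeSeries := by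
  ext1 n
  rw [← coeff_mul_expTrunc_timeSeries _ n.lt_succ_self]
  have h := derivation_expTrunc_succ ((d⁄dX (MvPolynomial ℕ ℂ)).restrictScalars ℂ) (n + 1)
    timeSeries
  rw [Derivation.restrictScalars_apply, Derivation.restrictScalars_apply] at h
  rw [← h, PowerSeries.coeff_derivative, PowerSeries.coeff_derivative,
    coeff_expTrunc_timeSeries (by omega), pSeries, PowerSeries.coeff_mk]

lemma coeffDerivation_pSeries (D : Derivation ℂ (MvPolynomial ℕ ℂ) (MvPolynomial ℕ ℂ)) :
    coeffDerivation D pSeries = pSeries * coeffDerivation D timeSeries := by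
  ext1 n
  rw [← coeff_mul_expTrunc_timeSeries _ n.lt_succ_self, ← derivation_expTrunc_succ,
    coeff_coeffDerivation, coeff_coeffDerivation, coeff_expTrunc_timeSeries (by omega),
    pSeries, PowerSeries.coeff_mk]

lemma coeffDerivation_pderiv_timeSeries {i : ℕ} (hi : 1 ≤ i) :
    coeffDerivation (pderiv i) timeSeries = PowerSeries.X ^ i := by
  ext1 n
  rw [coeff_coeffDerivation, coeff_timeSeries, PowerSeries.coeff_X_pow]
  split_ifs with h0 hn hn
  · omega
  · exact map_zero _
  · rw [hn, pderiv_X_self]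
  · exact pderiv_X_of_ne hn

lemma pz_of_neg {n : ℤ} (h : n < 0) : pz n = 0 := if_neg (by omega)

lemma pz_natCast (n : ℕ) : pz n = pS n := by simp [pz]

lemma pderiv_pz {i : ℕ} (hi : 1 ≤ i) (n : ℤ) : pderiv i (pz n) = pz (n - i) := by
  rcases lt_or_ge n 0 with hn | hn
  · rw [pz_of_neg hn, pz_of_neg (by omega), map_zero]
  · lift n to ℕ using hn
    have h := congrArg (PowerSeries.coeff n) (coeffDerivation_pSeries (pderiv i))
    rw [coeffDerivation_pderiv_timeSeries hi, coeff_coeffDerivation,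
      PowerSeries.coeff_mul_X_pow', pSeries, PowerSeries.coeff_mk] at h
    rw [pz_natCast, h]
    split_ifs with hin
    · rw [PowerSeries.coeff_mk, ← pz_natCast, Nat.cast_sub hin]
    · rw [pz_of_neg (by omega)]

/-! ### Specialization at `[x_1] + ⋯ + [x_k]` -/

lemma map_powerSeries_derivative {A B : Type*} [CommSemiring A] [CommSemiring B] (φ : A →+* B)
    (f : A⟦X⟧) :
    PowerSeries.map φ (d⁄dX A f) = d⁄dX B (PowerSeries.map φ f) := by
  ext1 n
  simp [PowerSeries.coeff_derivative]

section ElementarySymmetric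

variable (σ R : Type*) [Fintype σ]

lemma esymm_eq_zero_of_card_lt [CommSemiring R] {j : ℕ} (h : Fintype.card σ < j) :
    esymm σ R j = 0 := by
  rw [esymm, Finset.powersetCard_eq_empty.2 (by simpa using h), Finset.sum_empty]

variable [CommRing R]

/-- The series `∏ (1 - x_i z)`, given by its coefficients. -/
noncomputable def signedEsymmSeries : (MvPolynomial σ R)⟦X⟧ :=
  PowerSeries.mk fun j => (-1) ^ j * esymm σ R j

lemma derivative_signedEsymmSeries :
    d⁄dX _ (signedEsymmSeries σ R) =
      -(signedEsymmSeries σ R * PowerSeries.mk fun n => psum σ R (n + 1)) := by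
  ext1 n
  have newton := mul_esymm_eq_sum σ R (n + 1)
  rw [Finset.sum_filter, Finset.Nat.sum_antidiagonal_succ', if_neg (lt_irrefl _), zero_add,
    Finset.sum_congr rfl fun ab hab => if_pos (Finset.Nat.antidiagonal.fst_lt hab)] at newton
  have h_sign : (-1 : MvPolynomial σ R) ^ (n + 1) * (-1) ^ (n + 1 + 1) = -1 := by
    rw [← pow_add]
    exact Odd.neg_one_pow ⟨n + 1, by ring⟩
  simp only [signedEsymmSeries, PowerSeries.coeff_derivative, map_neg, PowerSeries.coeff_mul,
    PowerSeries.coeff_mk]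
  rw [mul_assoc, mul_comm (esymm σ R _), ← Nat.cast_succ, newton, ← mul_assoc, h_sign,
    neg_one_mul]

end ElementarySymmetric

/-- The specialization `t = [x_1] + ⋯ + [x_k]`. -/
noncomputable def evalHom (k : ℕ) : MvPolynomial ℕ ℂ →ₐ[ℂ] MvPolynomial (Fin k) ℂ :=
  aeval (psumC k)

lemma derivative_map_timeSeries (k : ℕ) :
    d⁄dX _ (PowerSeries.map (evalHom k : _ →+* _) timeSeries) =
      PowerSeries.mk fun n => psum (Fin k) ℂ (n + 1) := by
  ext1 n
  have hn : ((n + 1 : ℕ) : ℂ) ≠ 0 := Nat.cast_ne_zero.2 n.succ_ne_zero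
  rw [PowerSeries.coeff_derivative, PowerSeries.coeff_map, coeff_timeSeries,
    if_neg n.succ_ne_zero, PowerSeries.coeff_mk, RingHom.coe_coe, evalHom, aeval_X, psumC, psum,
    ← Nat.cast_succ, ← map_natCast C, mul_comm, ← smul_eq_C_mul, smul_inv_smul₀ hn]

lemma signedEsymmSeries_mul_map_pSeries (k : ℕ) :
    signedEsymmSeries (Fin k) ℂ * PowerSeries.map (evalHom k : _ →+* _) pSeries = 1 := by
  refine PowerSeries.derivative.ext ?_ ?_
  · rw [Derivation.leibniz, ← map_powerSeries_derivative, derivative_pSeries, map_mul,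
      map_powerSeries_derivative, derivative_map_timeSeries, derivative_signedEsymmSeries,
      PowerSeries.derivative_one]
    simp only [smul_eq_mul]
    ring
  · rw [map_mul, map_one, ← PowerSeries.coeff_zero_eq_constantCoeff_apply,
      ← PowerSeries.coeff_zero_eq_constantCoeff_apply, PowerSeries.coeff_map, signedEsymmSeries,
      pSeries, PowerSeries.coeff_mk, PowerSeries.coeff_mk]
    simp [pS]

lemma sum_signedEsymm_mul_evalHom_pz {k K : ℕ} (hK : k ≤ K) {n : ℤ} (hn : n ≠ 0) :
    ∑ j ∈ Finset.range (K + 1),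
      (-1) ^ j * esymm (Fin k) ℂ j * evalHom k (pz (n - j)) = 0 := by
  rcases hn.lt_or_gt with hn | hn
  · refine Finset.sum_eq_zero fun j _ => ?_
    rw [pz_of_neg (by omega), map_zero, mul_zero]
  · lift n to ℕ using hn.le
    have h_coeff := congrArg (PowerSeries.coeff n) (signedEsymmSeries_mul_map_pSeries k)
    rw [PowerSeries.coeff_mul, Finset.Nat.sum_antidiagonal_eq_sum_range_succ_mk,
      PowerSeries.coeff_one, if_neg (by omega)] at h_coeff
    rw [← h_coeff]
    refine Finset.sum_congr_of_eq_on_inter (fun j _ hj => ?_) (fun j _ hj => ?_)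
      fun j _ hj => ?_
    · rw [pz_of_neg (by simp at hj; omega), map_zero, mul_zero]
    · rw [signedEsymmSeries, PowerSeries.coeff_mk,
        esymm_eq_zero_of_card_lt _ _ (by simp at hj ⊢; omega), mul_zero, zero_mul]
    · have hjn : j ≤ n := Nat.lt_succ_iff.1 (Finset.mem_range.1 hj)
      rw [signedEsymmSeries, pSeries, PowerSeries.coeff_map, PowerSeries.coeff_mk,
        PowerSeries.coeff_mk, RingHom.coe_coe, ← pz_natCast, Nat.cast_sub hjn]

/-! ### Determinants in the `p_n` and their derivatives -/

/-- The determinant `det (p_{m_a + b})`, of which the Schur functions are the instances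
`m_a = λ_a - a`. Unlike Schur functions, these are stable under derivatives. -/
noncomputable def shiftDet {n : ℕ} (m : Fin n → ℤ) : MvPolynomial ℕ ℂ :=
  Matrix.det (Matrix.of fun a b : Fin n => pz (m a + ((b : ℕ) : ℤ)))

lemma schur_eq_shiftDet {n : ℕ} (ν : Fin n → ℕ) :
    schur ν = shiftDet fun a => (ν a : ℤ) - (a : ℕ) := rfl

lemma evalHom_shiftDet_eq_zero {n k : ℕ} (m : Fin n → ℤ) (b : Fin n) (hb : k ≤ b)
    (hm : ∀ a, m a ≠ -((b : ℕ) : ℤ)) : evalHom k (shiftDet m) = 0 := by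
  let e (j : ℕ) : MvPolynomial (Fin k) ℂ := (-1) ^ j * esymm (Fin k) ℂ j
  rw [shiftDet, AlgHom.map_det]
  refine Matrix.exists_mulVec_eq_zero_iff.1 ⟨fun c => if c ≤ b then e (b - c) else 0, ?_, ?_⟩
  · refine Function.ne_iff.2 ⟨b, ?_⟩
    simp [e]
  · funext a
    calc ∑ c : Fin n, evalHom k (pz (m a + (c : ℕ))) * (if c ≤ b then e (b - c) else 0)
        = ∑ c ∈ Finset.range n,
            if c ≤ (b : ℕ) then evalHom k (pz (m a + c)) * e (b - c) else 0 := by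
          simp only [Finset.sum_range, mul_ite, mul_zero, Fin.le_def]
      _ = ∑ c ∈ Finset.range (b + 1), evalHom k (pz (m a + c)) * e (b - c) := by
          rw [← Finset.sum_filter]
          congr 1
          ext c
          simp only [Finset.mem_filter, Finset.mem_range]
          omega
      _ = ∑ j ∈ Finset.range (b + 1), e j * evalHom k (pz (m a + (b : ℕ) - j)) := by
          rw [← Finset.sum_range_reflect]
          refine Finset.sum_congr rfl fun j hj => ?_
          have hjb : j ≤ b := Nat.lt_succ_iff.1 (Finset.mem_range.1 hj)
          rw [mul_comm, Nat.add_sub_cancel, Nat.sub_sub_self hjb, Nat.cast_sub hjb,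
            add_sub_assoc]
      _ = 0 := sum_signedEsymm_mul_evalHom_pz hb fun h => hm a (eq_neg_of_add_eq_zero_left h)

section DerivationDet

variable {R A ι : Type*} [CommRing R] [CommRing A] [Algebra R A] [DecidableEq ι]

lemma derivation_prod (D : Derivation R A A) (s : Finset ι) (f : ι → A) :
    D (∏ j ∈ s, f j) = ∑ a ∈ s, ∏ j ∈ s, Function.update f a (D (f a)) j := by
  induction s using Finset.induction_on with
  | empty => simp
  | insert a s ha ih =>
    have h_rest : ∀ c ∈ s, ∏ j ∈ insert a s, Function.update f c (D (f c)) j =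
        f a * ∏ j ∈ s, Function.update f c (D (f c)) j := fun c hc => by
      rw [Finset.prod_insert ha, Function.update_of_ne (ne_of_mem_of_not_mem hc ha).symm]
    rw [Finset.prod_insert ha, D.leibniz, ih, Finset.sum_insert ha, Finset.sum_congr rfl h_rest,
      ← Finset.mul_sum, Finset.prod_insert ha, Function.update_self,
      Finset.prod_update_of_notMem ha, smul_eq_mul, smul_eq_mul, add_comm, mul_comm (D (f a))]

lemma derivation_det [Fintype ι] (D : Derivation R A A) (M : Matrix ι ι A) :
    D M.det = ∑ b, (M.updateCol b fun a => D (M a b)).det := by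
  simp only [Matrix.det_apply, map_sum, Units.smul_def, map_zsmul, derivation_prod,
    Finset.smul_sum]
  rw [Finset.sum_comm]
  refine Finset.sum_congr rfl fun b _ => Finset.sum_congr rfl fun σ _ => ?_
  congr 1
  refine Finset.prod_congr rfl fun j _ => ?_
  rcases eq_or_ne j b with rfl | hjb
  · simp
  · simp [hjb]

end DerivationDet

lemma pderiv_shiftDet {n i : ℕ} (hi : 1 ≤ i) (m : Fin n → ℤ) :
    pderiv i (shiftDet m) = ∑ a, shiftDet (m - Pi.single a (i : ℤ)) := by
  rw [shiftDet, ← Matrix.det_transpose, derivation_det]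
  refine Finset.sum_congr rfl fun a _ => ?_
  rw [← Matrix.det_transpose, shiftDet]
  congr 1
  ext1 c b
  rcases eq_or_ne c a with rfl | hca
  · simp [pderiv_pz hi, add_sub_right_comm]
  · simp [hca]

/-- The columns `b ≥ k` of an `n × n` determinant. -/
def tailIndices (n k : ℕ) : Finset (Fin n) := {b | k ≤ (b : ℕ)}

lemma mem_tailIndices {n k : ℕ} {b : Fin n} : b ∈ tailIndices n k ↔ k ≤ (b : ℕ) := by
  simp [tailIndices]

/-- The span of the determinants `shiftDet m`, of any size, such that in the Laplace expansion
along the columns `b ≥ k` every minor from these columns has degree greater than `d`. The minor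
with rows `S` has degree `∑ a ∈ S, m a + ∑ b ≥ k, b`. -/
noncomputable def tailDegreeSpan (k d : ℕ) : Submodule ℂ (MvPolynomial ℕ ℂ) :=
  Submodule.span ℂ {p | ∃ (n : ℕ) (m : Fin n → ℤ),
    (∀ S : Finset (Fin n), S.card = (tailIndices n k).card →
      (d : ℤ) < ∑ a ∈ S, m a + ∑ b ∈ tailIndices n k, ((b : ℕ) : ℤ)) ∧ shiftDet m = p}

lemma pderiv_mem_tailDegreeSpan {k d i : ℕ} (hi : 1 ≤ i) {p : MvPolynomial ℕ ℂ}
    (hp : p ∈ tailDegreeSpan k (d + i)) : pderiv i p ∈ tailDegreeSpan k d := by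
  refine (Submodule.span_le (p := (tailDegreeSpan k d).comap (pderiv i).toLinearMap)).2 ?_ hp
  rintro _ ⟨n, m, hm, rfl⟩
  change pderiv i (shiftDet m) ∈ tailDegreeSpan k d
  rw [pderiv_shiftDet hi]
  refine sum_mem fun a _ => Submodule.subset_span ⟨n, _, fun S hS => ?_, rfl⟩
  have h_sum : ∑ c ∈ S, (Pi.single a (i : ℤ) : Fin n → ℤ) c ≤ i := by
    simp only [Pi.single_apply, Finset.sum_ite_eq']
    split_ifs <;> simp
  have h_deg := hm S hS
  simp only [Pi.sub_apply, Finset.sum_sub_distrib]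
  push_cast at h_deg
  linarith

lemma evalHom_eq_zero_of_mem_tailDegreeSpan {k : ℕ} {p : MvPolynomial ℕ ℂ}
    (hp : p ∈ tailDegreeSpan k 0) : evalHom k p = 0 := by
  refine (Submodule.span_le (p := LinearMap.ker (evalHom k).toLinearMap)).2 ?_ hp
  rintro _ ⟨n, m, hm, rfl⟩
  change evalHom k (shiftDet m) = 0
  by_contra h_ne
  have h_root : ∀ b ∈ tailIndices n k, ∃ a, m a = -((b : ℕ) : ℤ) := fun b hb => by
    by_contra! h
    exact h_ne (evalHom_shiftDet_eq_zero m b (mem_tailIndices.1 hb) h)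
  choose! g hg using h_root
  have h_inj : Set.InjOn g (tailIndices n k) := fun b hb c hc hbc => by
    have := hg b hb
    rw [hbc, hg c hc] at this
    exact Fin.ext (by omega)
  have h_deg := hm _ (Finset.card_image_of_injOn h_inj)
  rw [Finset.sum_image h_inj, Finset.sum_congr rfl hg, Finset.sum_neg_distrib] at h_deg
  simp at h_deg

/-- The derivative `∂_{i_1} ⋯ ∂_{i_r}` of a polynomial, for `L = [i_1, ..., i_r]`. -/
noncomputable def iterPDeriv (L : List ℕ) (p : MvPolynomial ℕ ℂ) : MvPolynomial ℕ ℂ :=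
  L.foldr (fun i q => pderiv i q) p

lemma iterPDeriv_mem_tailDegreeSpan {k d : ℕ} {L : List ℕ} (hL : ∀ i ∈ L, 1 ≤ i)
    {p : MvPolynomial ℕ ℂ} (hp : p ∈ tailDegreeSpan k (d + L.sum)) :
    iterPDeriv L p ∈ tailDegreeSpan k d := by
  induction L generalizing d with
  | nil => simpa [iterPDeriv] using hp
  | cons i L ih =>
    obtain ⟨hi, hL⟩ := List.forall_mem_cons.1 hL
    exact pderiv_mem_tailDegreeSpan hi (ih hL (by rwa [add_assoc, ← List.sum_cons]))

lemma sum_le_sum_of_antitone_of_isUpperSet {ι M : Type*} [LinearOrder ι] [AddCommMonoid M]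
    [PartialOrder M] [IsOrderedAddMonoid M] {f : ι → M} (hf : Antitone f) {S T : Finset ι}
    (hT : IsUpperSet (T : Set ι)) (h_card : S.card = T.card) :
    ∑ a ∈ T, f a ≤ ∑ a ∈ S, f a := by
  have h_lt : ∀ a ∈ S \ T, ∀ b ∈ T \ S, a ≤ b := fun a ha b hb => by
    simp only [Finset.mem_sdiff] at ha hb
    exact le_of_not_ge fun hba => ha.2 (hT hba hb.1)
  let e : (T \ S : Finset ι) ≃ (S \ T : Finset ι) :=
    Finset.equivOfCardEq (Finset.card_sdiff_comm h_card.symm)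
  calc ∑ a ∈ T, f a = ∑ a ∈ T ∩ S, f a + ∑ b : (T \ S : Finset ι), f b := by
        rw [Finset.sum_coe_sort, Finset.sum_inter_add_sum_sdiff]
    _ ≤ ∑ a ∈ T ∩ S, f a + ∑ b : (T \ S : Finset ι), f (e b) := by
        gcongr with b
        exact hf (h_lt _ (e b).2 _ b.2)
    _ = ∑ a ∈ S, f a := by
        rw [e.sum_comp fun a : (S \ T : Finset ι) => f a, Finset.sum_coe_sort, Finset.inter_comm,
          Finset.sum_inter_add_sum_sdiff]

lemma schur_mem_tailDegreeSpan {n k d : ℕ} {ν : Fin n → ℕ} (hν : Antitone ν)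
    (hd : d < ∑ a ∈ tailIndices n k, ν a) : schur ν ∈ tailDegreeSpan k d := by
  refine Submodule.subset_span ⟨n, _, fun S hS => ?_, (schur_eq_shiftDet ν).symm⟩
  have h_anti : Antitone fun a : Fin n => (ν a : ℤ) - (a : ℕ) := fun a b hab => by
    have := hν hab
    have := Fin.le_def.1 hab
    dsimp only
    omega
  have h_upper : IsUpperSet (tailIndices n k : Set (Fin n)) := fun a b hab ha =>
    mem_tailIndices.2 ((mem_tailIndices.1 ha).trans hab)
  have h_min := sum_le_sum_of_antitone_of_isUpperSet h_anti h_upper hS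
  rw [Finset.sum_sub_distrib] at h_min
  zify at hd
  linarith

lemma sum_tailIndices {M : Type*} [AddCommMonoid M] (n k : ℕ) (f : ℕ → M) :
    ∑ a ∈ tailIndices n k, f a = ∑ a ∈ Finset.Ico k n, f a := by
  rw [tailIndices, Finset.sum_filter, Fin.sum_univ_eq_sum_range fun a => if k ≤ a then f a else 0,
    ← Finset.sum_filter]
  congr 1
  ext a
  simp [and_comm]

lemma schur_pad_mem_tailDegreeSpan {l k d : ℕ} {lam : Fin l → ℕ} (hanti : Antitone lam)
    (hd : d < ∑ a ∈ Finset.Ico k l, pad lam a) : schur lam ∈ tailDegreeSpan k d := by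
  refine schur_mem_tailDegreeSpan hanti ?_
  rw [← sum_tailIndices] at hd
  simpa [pad] using hd

lemma Ptn.toFun_eq_zero_of_len_le {μ : Ptn} {a : ℕ} (h : μ.len ≤ a) : μ.toFun a = 0 :=
  Nat.le_zero.1 ((μ.anti _ _ h).trans (Nat.find_spec μ.bdd).le)

lemma schurP_mem_tailDegreeSpan {l k d : ℕ} {lam : Fin l → ℕ} {μ : Ptn} (hμ : PtnGt lam μ)
    (hd : d < ∑ a ∈ Finset.Ico k l, pad lam a) : μ.schurP ∈ tailDegreeSpan k d := by
  refine schur_mem_tailDegreeSpan (fun a b hab => μ.anti _ _ hab) (hd.trans_le ?_)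
  rw [sum_tailIndices _ _ μ.toFun]
  calc ∑ a ∈ Finset.Ico k l, pad lam a ≤ ∑ a ∈ Finset.Ico k l, μ.toFun a :=
        Finset.sum_le_sum fun a _ => hμ.1 a
    _ ≤ ∑ a ∈ Finset.Ico k μ.len, μ.toFun a := by
        refine Finset.sum_le_sum_of_ne_zero fun a ha h_ne => ?_
        refine Finset.mem_Ico.2 ⟨(Finset.mem_Ico.1 ha).1, lt_of_not_ge fun h => h_ne ?_⟩
        exact Ptn.toFun_eq_zero_of_len_le h

/-! ### Homogeneity -/

lemma isWeightedHomogeneous_pz (n : ℤ) :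
    IsWeightedHomogeneous (fun j : ℕ => (j : ℤ)) (pz n) n := by
  rcases lt_or_ge n 0 with hn | hn
  · rw [pz_of_neg hn]
    exact isWeightedHomogeneous_zero _ _ _
  lift n to ℕ using hn
  rw [pz_natCast, pS]
  refine IsWeightedHomogeneous.sum _ _ _ fun m _ => ?_
  rw [smul_eq_C_mul]
  refine IsWeightedHomogeneous.C_mul (IsWeightedHomogeneous.sum _ _ _ fun c hc => ?_) _
  convert IsWeightedHomogeneous.prod Finset.univ _ _ fun j _ =>
    isWeightedHomogeneous_X ℂ (fun j : ℕ => (j : ℤ)) (c j : ℕ)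
  rw [← Nat.cast_sum, (Finset.mem_filter.1 hc).2.1]

lemma isWeightedHomogeneous_shiftDet {n : ℕ} (m : Fin n → ℤ) :
    IsWeightedHomogeneous (fun j : ℕ => (j : ℤ)) (shiftDet m) (∑ a, (m a + (a : ℕ))) := by
  rw [shiftDet, Matrix.det_apply]
  refine IsWeightedHomogeneous.sum _ _ _ fun σ _ =>
    zsmul_mem (K := weightedHomogeneousSubmodule ℂ _ _) ?_ _
  rw [Finset.sum_add_distrib, ← Equiv.sum_comp σ m, ← Finset.sum_add_distrib]
  exact IsWeightedHomogeneous.prod _ _ _ fun a _ => isWeightedHomogeneous_pz _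

lemma isWeightedHomogeneous_schur {n : ℕ} (ν : Fin n → ℕ) :
    IsWeightedHomogeneous (fun j : ℕ => (j : ℤ)) (schur ν) (∑ a, ν a : ℕ) := by
  simpa [schur_eq_shiftDet] using isWeightedHomogeneous_shiftDet fun a => (ν a : ℤ) - (a : ℕ)

lemma Ptn.toFun_pos_of_lt_len {μ : Ptn} {a : ℕ} (h : a < μ.len) : 0 < μ.toFun a :=
  Nat.pos_of_ne_zero (Nat.find_min μ.bdd h)

lemma Ptn.toFun_injective : Function.Injective Ptn.toFun := by
  rintro ⟨⟩ ⟨⟩ rfl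
  rfl

/-- The number `|μ|` of which `μ` is a partition. -/
noncomputable def Ptn.size (μ : Ptn) : ℕ := ∑ a ∈ Finset.range μ.len, μ.toFun a

lemma Ptn.len_le_size (μ : Ptn) : μ.len ≤ μ.size := by
  simpa [Ptn.size] using Finset.card_nsmul_le_sum (Finset.range μ.len) μ.toFun 1 fun a ha =>
    Ptn.toFun_pos_of_lt_len (Finset.mem_range.1 ha)

lemma Ptn.toFun_le_size (μ : Ptn) (a : ℕ) : μ.toFun a ≤ μ.size := by
  rcases lt_or_ge a μ.len with ha | ha
  · exact Finset.single_le_sum (fun _ _ => Nat.zero_le _) (Finset.mem_range.2 ha)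
  · rw [Ptn.toFun_eq_zero_of_len_le ha]
    exact Nat.zero_le _

lemma Ptn.finite_setOf_size_eq (w : ℕ) : {μ : Ptn | μ.size = w}.Finite := by
  refine Set.Finite.of_injOn (f := fun μ : Ptn => fun a : Fin w => μ.toFun a)
    (t := Set.Iic fun _ => w) ?_ ?_ (Set.finite_Iic _)
  · rintro μ rfl a
    exact μ.toFun_le_size a
  · intro μ hμ ν hν h
    refine Ptn.toFun_injective (funext fun a => ?_)
    rcases lt_or_ge a w with ha | ha
    · exact congrFun h ⟨a, ha⟩
    · rw [Ptn.toFun_eq_zero_of_len_le (μ.len_le_size.trans (hμ.le.trans ha)),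
        Ptn.toFun_eq_zero_of_len_le (ν.len_le_size.trans (hν.le.trans ha))]

lemma isWeightedHomogeneous_schurP (μ : Ptn) :
    IsWeightedHomogeneous (fun j : ℕ => (j : ℤ)) μ.schurP μ.size := by
  rw [Ptn.size, Finset.sum_range]
  exact isWeightedHomogeneous_schur _

lemma finite_setOf_coeff_schurP_ne_zero (β : ℕ →₀ ℕ) :
    {μ : Ptn | coeff β μ.schurP ≠ 0}.Finite := by
  refine (Ptn.finite_setOf_size_eq (Finsupp.weight (fun j : ℕ => (j : ℤ)) β).toNat).subset ?_
  intro μ hμ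
  simp [isWeightedHomogeneous_schurP μ hμ]

/-! ### Passage to formal series -/

lemma evalPS_coeff (k : ℕ) (p : MvPolynomial ℕ ℂ) (γ : Fin k →₀ ℕ) :
    evalPS k (fun β => coeff β p) γ = coeff γ (evalHom k p) := by
  rw [evalPS, finsum_eq_sum_of_support_subset (s := p.support), evalHom, aeval_def, eval₂_eq,
    coeff_sum]
  · simp only [algebraMap_eq, coeff_C_mul]
  · exact fun β hβ => mem_support_iff.2 (left_ne_zero_of_mul hβ)

lemma coeff_iterPDeriv (L : List ℕ) (p : MvPolynomial ℕ ℂ) (β : ℕ →₀ ℕ) :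
    coeff β (iterPDeriv L p) = derivsCoeff L (fun β => coeff β p) β := by
  induction L generalizing β with
  | nil => rfl
  | cons i L ih =>
    exact (coeff_pderiv _ _).trans (by rw [← iterPDeriv, ih, mul_comm]; rfl)

lemma derivsCoeff_congr (L : List ℕ) {F G : (ℕ →₀ ℕ) → ℂ} {β : ℕ →₀ ℕ}
    (h : F (β + (L.map fun i => Finsupp.single i 1).sum) =
      G (β + (L.map fun i => Finsupp.single i 1).sum)) :
    derivsCoeff L F β = derivsCoeff L G β := by
  induction L generalizing β with
  | nil => simpa [derivsCoeff] using h
  | cons i L ih =>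
    have h_tail := ih (β := β + Finsupp.single i 1) (by simpa [add_assoc] using h)
    exact congrArg _ h_tail

lemma isHomogeneous_psumC (k n : ℕ) : (psumC k n).IsHomogeneous n := by
  rw [psumC, smul_eq_C_mul]
  exact IsHomogeneous.C_mul (IsHomogeneous.sum _ _ _ fun i _ => isHomogeneous_X_pow i n) _

lemma finite_setOf_coeff_prod_psumC_ne_zero (k : ℕ) (γ : Fin k →₀ ℕ) :
    {β : ℕ →₀ ℕ | coeff γ (∏ n ∈ β.support, psumC k n ^ β n) ≠ 0}.Finite := by
  set d := γ.degree
  refine (Finset.finite_toSet (Finset.finsupp (Finset.range (d + 1))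
    fun _ => Finset.range (d + 1))).subset fun β hβ => ?_
  have h_wt : ∑ j ∈ β.support, j * β j = d := by
    by_contra h_ne
    refine hβ (IsHomogeneous.coeff_eq_zero ?_ (Ne.symm h_ne))
    exact IsHomogeneous.prod _ _ _ fun j _ => (isHomogeneous_psumC k j).pow _
  have h_le : ∀ j ∈ β.support, j * β j ≤ d := fun j hj =>
    (Finset.single_le_sum (fun _ _ => Nat.zero_le _) hj).trans h_wt.le
  have h_pos : ∀ j ∈ β.support, 0 < j := by
    refine fun j hj => Nat.pos_of_ne_zero ?_
    rintro rfl
    refine hβ ?_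
    rw [Finset.prod_eq_zero hj, coeff_zero]
    simp [psumC, Finsupp.mem_support_iff.1 hj]
  refine Finset.mem_finsupp_iff.2 ⟨fun j hj => ?_, fun j _ => ?_⟩
  · have := Nat.le_mul_of_pos_right j (Nat.pos_of_ne_zero (Finsupp.mem_support_iff.1 hj))
    exact Finset.mem_range_succ_iff.2 (this.trans (h_le j hj))
  · rw [Finset.mem_range_succ_iff]
    by_cases hj : j ∈ β.support
    · exact (Nat.le_mul_of_pos_left _ (h_pos j hj)).trans (h_le j hj)
    · rw [Finsupp.notMem_support_iff.1 hj]
      exact Nat.zero_le _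

lemma exists_finset_evalPS_derivsCoeff_congr (k : ℕ) (L : List ℕ) (γ : Fin k →₀ ℕ) :
    ∃ B : Finset (ℕ →₀ ℕ), ∀ F G : (ℕ →₀ ℕ) → ℂ, (∀ β ∈ B, F β = G β) →
      evalPS k (derivsCoeff L F) γ = evalPS k (derivsCoeff L G) γ := by
  classical
  have h_fin := finite_setOf_coeff_prod_psumC_ne_zero k γ
  refine ⟨h_fin.toFinset.image (· + (L.map fun i => Finsupp.single i 1).sum),
    fun F G hFG => finsum_congr fun β => ?_⟩
  by_cases hβ : coeff γ (∏ n ∈ β.support, psumC k n ^ β n) = 0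
  · rw [hβ, mul_zero, mul_zero]
  · rw [derivsCoeff_congr L (hFG _ (Finset.mem_image_of_mem _ (h_fin.mem_toFinset.2 hβ)))]

lemma exists_mem_coeff_eq_finsum_mem {ι σ R : Type*} [CommSemiring R]
    {V : Submodule R (MvPolynomial σ R)} {S : Set ι} {p : ι → MvPolynomial σ R}
    (hp : ∀ μ ∈ S, p μ ∈ V) (h_fin : ∀ β, {μ | coeff β (p μ) ≠ 0}.Finite) (ξ : ι → R)
    (B : Finset (σ →₀ ℕ)) :
    ∃ P ∈ V, ∀ β ∈ B, coeff β P = ∑ᶠ μ ∈ S, ξ μ * coeff β (p μ) := by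
  have h_fin_B : (S ∩ ⋃ β ∈ B, {μ | coeff β (p μ) ≠ 0}).Finite :=
    (B.finite_toSet.biUnion fun β _ => h_fin β).inter_of_right S
  refine ⟨∑ μ ∈ h_fin_B.toFinset, ξ μ • p μ, sum_mem fun μ hμ => ?_, fun β hβ => ?_⟩
  · exact V.smul_mem _ (hp μ (h_fin_B.mem_toFinset.1 hμ).1)
  · have h_supp : (Function.support fun μ => ξ μ * coeff β (p μ)) ⊆
        ⋃ β ∈ B, {μ | coeff β (p μ) ≠ 0} :=
      fun μ hμ => Set.mem_biUnion hβ (right_ne_zero_of_mul hμ)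
    rw [coeff_sum, finsum_mem_eq_sum_of_inter_support_eq (t := h_fin_B.toFinset)]
    · simp only [coeff_smul, smul_eq_mul]
    · rw [h_fin_B.coe_toFinset, Set.inter_assoc, Set.inter_eq_self_of_subset_right h_supp]

/-- Let `λ` be a partition of length `l`, `ξ_μ ∈ ℂ` arbitrary scalars and
`τ(t) = s_λ(t) + Σ_{λ<μ} ξ_μ s_μ(t)` (a formal power series in `t`, given here by its
coefficient function `tauCoeff lam ξ`). Let `0 ≤ k ≤ l-1` and `α` a multi-index
(encoded as the list `L` of indices of the derivatives `∂_i`, with multiplicity, so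
`wt α = L.sum`) with `wt α < N_{λ,k} = λ_{k+1}+⋯+λ_l`. Then `∂^α τ(t)` evaluated at
`t = [x_1]+⋯+[x_k]` is zero as a formal power series in `x_1,...,x_k`, i.e. every
coefficient `γ` of the resulting series vanishes. -/
theorem statement17 (l : ℕ) (lam : Fin l → ℕ)
    (hanti : Antitone lam) (hpos : ∀ i, 1 ≤ lam i)
    (ξ : Ptn → ℂ)
    (k : ℕ) (hk : k + 1 ≤ l)
    (L : List ℕ) (hL : ∀ i ∈ L, 1 ≤ i)
    (hwt : L.sum < ∑ a ∈ Finset.Ico k l, pad lam a)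
    (γ : Fin k →₀ ℕ) :
    evalPS k (derivsCoeff L (tauCoeff lam ξ)) γ = 0 := by
  obtain ⟨B, hB⟩ := exists_finset_evalPS_derivsCoeff_congr k L γ
  obtain ⟨Q, hQ, hQ_coeff⟩ := exists_mem_coeff_eq_finsum_mem (S := {μ | PtnGt lam μ})
    (fun μ hμ => schurP_mem_tailDegreeSpan hμ hwt)
    finite_setOf_coeff_schurP_ne_zero ξ B
  have h_tau : ∀ β ∈ B, tauCoeff lam ξ β = coeff β (schur lam + Q) := fun β hβ => by
    rw [coeff_add, hQ_coeff β hβ]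
    rfl
  have h_mem : schur lam + Q ∈ tailDegreeSpan k (0 + L.sum) := by
    rw [zero_add]
    exact add_mem (schur_pad_mem_tailDegreeSpan hanti hwt) hQ
  calc evalPS k (derivsCoeff L (tauCoeff lam ξ)) γ
      = evalPS k (derivsCoeff L fun β => coeff β (schur lam + Q)) γ := hB _ _ h_tau
    _ = evalPS k (fun β => coeff β (iterPDeriv L (schur lam + Q))) γ := by
        simp only [coeff_iterPDeriv]
    _ = coeff γ (evalHom k (iterPDeriv L (schur lam + Q))) := evalPS_coeff _ _ _
    _ = 0 := by
        rw [evalHom_eq_zero_of_mem_tailDegreeSpan (iterPDeriv_mem_tailDegreeSpan hL h_mem),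
          coeff_zero]
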